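/- If every function h_k, k ∈ {1,…,n}, is continuous and strictly monotone on [c,d], then the partial integral operator T₁ has no eigenvalue different from zero. -/

import Mathlib

open MeasureTheory Complex

noncomputable section

/-- The measure on `ℝ` given by restricting Lebesgue measure to `[a,b]`. -/
abbrev muI (a b : ℝ) : MeasureTheory.Measure ℝ :=
  MeasureTheory.volume.restrict (Set.Icc a b)

/-!
On almost every fibre `{y = const}` the operator `T₁` acts as the finite-rank operator
`g ↦ ∑ k, h k y • ⟪φ k, g⟫ • φ k`, which is diagonal in the orthonormal system `φ`, so its nonzero
eigenvalues are among the numbers `h k y`. An eigenvector of `T₁` for `lam ≠ 0` can therefore live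
only on the fibres with `h k y = lam` for some `k`, and an injective `h k` takes the value `lam` at
most once: these fibres form a null set.
-/

section ProductMeasure

variable {X Y : Type*} [MeasurableSpace X] [MeasurableSpace Y] {μ : Measure X} {ν : Measure Y}
  [SFinite μ] [SFinite ν]

theorem ae_ae_of_ae_prod_symm {P : X × Y → Prop} (hP : ∀ᵐ z ∂μ.prod ν, P z) :
    ∀ᵐ y ∂ν, ∀ᵐ x ∂μ, P (x, y) :=
  Measure.ae_ae_of_ae_prod (Measure.measurePreserving_swap.quasiMeasurePreserving.ae hP)

theorem memLp_prod_left_ae {E : Type*} [NormedAddCommGroup E] {p : ENNReal} {f : X × Y → E}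
    (hf : MemLp f p (μ.prod ν)) : ∀ᵐ y ∂ν, MemLp (fun x => f (x, y)) p μ := by
  have hmeas : ∀ᵐ y ∂ν, AEStronglyMeasurable (fun x => f (x, y)) μ :=
    hf.aestronglyMeasurable.prodMk_right
  rcases eq_or_ne p 0 with rfl | hp_zero
  · simpa only [memLp_zero_iff_aestronglyMeasurable] using hmeas
  rcases eq_or_ne p ⊤ with rfl | hp_top
  · have hbound : ∀ᵐ z ∂μ.prod ν, ‖f z‖ₑ ≤ eLpNorm f ⊤ (μ.prod ν) := ae_le_eLpNormEssSup
    filter_upwards [hmeas, ae_ae_of_ae_prod_symm hbound] with y hy hby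
      using ⟨hy, (eLpNormEssSup_le_of_ae_enorm_bound hby).trans_lt hf.eLpNorm_lt_top⟩
  · filter_upwards [hmeas, (hf.integrable_norm_rpow hp_zero hp_top).prod_left_ae] with y hy hint
      using (integrable_norm_rpow_iff hy hp_zero hp_top).1 hint

end ProductMeasure

theorem ae_restrict_ne_of_injOn {Y Z : Type*} [MeasurableSpace Y] {ν : Measure Y}
    [NullSingletonClass ν] {s : Set Y} (hs : MeasurableSet s) {h : Y → Z} (hh : s.InjOn h) (c : Z) :
    ∀ᵐ y ∂ν.restrict s, h y ≠ c := by
  have hsub : {y ∈ s | h y = c}.Subsingleton :=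
    fun y hy y' hy' => hh hy.1 hy'.1 (hy.2.trans hy'.2.symm)
  filter_upwards [ae_restrict_mem hs, ae_restrict_of_ae (hsub.countable.ae_notMem ν)]
    with y hys hy hyc using hy ⟨hys, hyc⟩

variable {𝕜 : Type*} [RCLike 𝕜]

theorem eq_zero_of_smul_eq_sum_inner_smul {H ι : Type*} [NormedAddCommGroup H]
    [InnerProductSpace 𝕜 H] [Fintype ι] {e : ι → H} (he : Orthonormal 𝕜 e) {η : ι → 𝕜} {lam : 𝕜}
    (hlam : lam ≠ 0) (hη : ∀ k, η k ≠ lam) {g : H}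
    (hg : lam • g = ∑ k, (η k * inner 𝕜 (e k) g) • e k) : g = 0 := by
  have hcoeff (j : ι) : inner 𝕜 (e j) g = 0 := by
    have hj : lam * inner 𝕜 (e j) g = η j * inner 𝕜 (e j) g := by
      rw [← inner_smul_right, hg, he.inner_right_fintype]
    by_contra hne
    exact hη j (mul_right_cancel₀ hne hj).symm
  simpa [hcoeff, hlam] using hg

section FiniteRankKernel

variable {X ι : Type*} [MeasurableSpace X] {μ : Measure X}

theorem inner_toLp_eq_integral {f g : X → 𝕜} (hf : MemLp f 2 μ) (hg : MemLp g 2 μ) :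
    inner 𝕜 (hf.toLp f) (hg.toLp g) = ∫ x, star (f x) * g x ∂μ := by
  rw [L2.inner_def]
  refine integral_congr_ae ?_
  filter_upwards [hf.coeFn_toLp, hg.coeFn_toLp] with x hfx hgx
  rw [hfx, hgx, RCLike.inner_apply', RCLike.star_def]

theorem orthonormal_toLp [DecidableEq ι] {φ : ι → X → 𝕜} (hφ : ∀ k, MemLp (φ k) 2 μ)
    (hφ_orth : ∀ i j, ∫ x, star (φ i x) * φ j x ∂μ = if i = j then 1 else 0) :
    Orthonormal 𝕜 fun k => (hφ k).toLp (φ k) :=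
  orthonormal_iff_ite.2 fun i j => (inner_toLp_eq_integral (hφ i) (hφ j)).trans (hφ_orth i j)

variable [Fintype ι] {φ : ι → X → 𝕜} {g : X → 𝕜}

theorem integral_finiteRank_kernel_mul (hφ : ∀ k, MemLp (φ k) 2 μ) (hg : MemLp g 2 μ)
    (η : ι → 𝕜) (x : X) :
    ∫ s, (∑ k, φ k x * star (φ k s) * η k) * g s ∂μ
      = ∑ k, (η k * inner 𝕜 ((hφ k).toLp (φ k)) (hg.toLp g)) * φ k x := by
  have hint (k : ι) : Integrable (fun s => star (φ k s) * g s) μ :=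
    (hφ k).star.integrable_mul hg
  calc ∫ s, (∑ k, φ k x * star (φ k s) * η k) * g s ∂μ
      = ∫ s, ∑ k, (η k * φ k x) * (star (φ k s) * g s) ∂μ := by
        refine integral_congr_ae (.of_forall fun s => ?_)
        simp only [Finset.sum_mul]
        exact Finset.sum_congr rfl fun k _ => by ring
    _ = ∑ k, (η k * φ k x) * ∫ s, star (φ k s) * g s ∂μ := by
        simp only [integral_finsetSum _ fun k _ => (hint k).const_mul (η k * φ k x),
          integral_const_mul]
    _ = ∑ k, (η k * inner 𝕜 ((hφ k).toLp (φ k)) (hg.toLp g)) * φ k x := by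
        simp only [inner_toLp_eq_integral, mul_right_comm]

theorem ae_eq_zero_of_mul_eq_integral_finiteRank_kernel [DecidableEq ι]
    (hφ : ∀ k, MemLp (φ k) 2 μ)
    (hφ_orth : ∀ i j, ∫ x, star (φ i x) * φ j x ∂μ = if i = j then 1 else 0) {η : ι → 𝕜} {lam : 𝕜}
    (hlam : lam ≠ 0) (hη : ∀ k, η k ≠ lam) (hg : MemLp g 2 μ)
    (heq : ∀ᵐ x ∂μ, lam * g x = ∫ s, (∑ k, φ k x * star (φ k s) * η k) * g s ∂μ) :
    g =ᵐ[μ] 0 := by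
  have heigen : lam • hg.toLp g =
      ∑ k, (η k * inner 𝕜 ((hφ k).toLp (φ k)) (hg.toLp g)) • (hφ k).toLp (φ k) := by
    refine Lp.ext ?_
    filter_upwards [heq, Lp.coeFn_smul lam (hg.toLp g), hg.coeFn_toLp,
      ae_all_iff.2 fun k => (hφ k).coeFn_toLp,
      ae_all_iff.2 fun k => Lp.coeFn_smul (η k * inner 𝕜 ((hφ k).toLp (φ k)) (hg.toLp g))
        ((hφ k).toLp (φ k)),
      Lp.coeFn_finsetSum Finset.univ fun k =>
        (η k * inner 𝕜 ((hφ k).toLp (φ k)) (hg.toLp g)) • (hφ k).toLp (φ k)]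
      with x hx hsmul_g hgx hφx hsmul_φ hsum
    rw [hsmul_g, hsum, Finset.sum_apply]
    simp only [hsmul_φ, Pi.smul_apply, smul_eq_mul, hφx, hgx]
    rw [hx, integral_finiteRank_kernel_mul hφ hg]
  have hzero : hg.toLp g = 0 :=
    eq_zero_of_smul_eq_sum_inner_smul (orthonormal_toLp hφ hφ_orth) hlam hη heigen
  exact hg.coeFn_toLp.symm.trans (Lp.eq_zero_iff_ae_eq_zero.1 hzero)

end FiniteRankKernel

section PartialIntegral

variable {X Y ι : Type*} [MeasurableSpace X] [MeasurableSpace Y] {μ : Measure X} {ν : Measure Y}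
  {p : ENNReal}

/-- `T` is the partial integral operator on `Lᵖ(μ × ν)` with kernel `K`: it integrates out the
first variable against `K`, with the second variable kept as a parameter. On a fibre where the
integrand is not integrable the Bochner integral is `0`. -/
def IsPartialIntegralOperator (K : X → X → Y → 𝕜) (T : Module.End 𝕜 (Lp 𝕜 p (μ.prod ν))) : Prop :=
  ∀ f : Lp 𝕜 p (μ.prod ν),
    ∀ᵐ z ∂μ.prod ν, T f z = ∫ s, K z.1 s z.2 * f (s, z.2) ∂μ

variable [SFinite μ] [SFinite ν]

theorem not_hasEigenvalue_of_ae_fiber {K : X → X → Y → 𝕜} {T : Module.End 𝕜 (Lp 𝕜 p (μ.prod ν))}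
    (hT : IsPartialIntegralOperator K T) {lam : 𝕜}
    (hfiber : ∀ᵐ y ∂ν, ∀ g : X → 𝕜, MemLp g p μ →
      (∀ᵐ x ∂μ, lam * g x = ∫ s, K x s y * g s ∂μ) → g =ᵐ[μ] 0) :
    ¬ T.HasEigenvalue lam := by
  intro hlam
  obtain ⟨f, hf⟩ := hlam.exists_hasEigenvector
  have heigen : ∀ᵐ z ∂μ.prod ν, lam * f z = ∫ s, K z.1 s z.2 * f (s, z.2) ∂μ := by
    filter_upwards [hT f, Lp.coeFn_smul lam f] with z hTz hsmul
    rw [← hTz, hf.apply_eq_smul, hsmul, Pi.smul_apply, smul_eq_mul]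
  have hzero : ∀ᵐ y ∂ν, ∀ᵐ x ∂μ, f (x, y) = 0 := by
    filter_upwards [hfiber, memLp_prod_left_ae (Lp.memLp f), ae_ae_of_ae_prod_symm heigen]
      with y hy hmem heq using hy _ hmem heq
  have hmeas : MeasurableSet {z : X × Y | f z = 0} :=
    (Lp.stronglyMeasurable f).measurable (measurableSet_singleton 0)
  exact hf.2 <| (Lp.eq_zero_iff_ae_eq_zero).2 <|
    (Measure.ae_prod_iff_ae_ae hmeas).2 ((Measure.ae_ae_comm hmeas).2 hzero)

theorem statement5_general [Fintype ι] [DecidableEq ι] {φ : ι → X → 𝕜}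
    (hφ : ∀ k, MemLp (φ k) 2 μ)
    (hφ_orth : ∀ i j, ∫ x, star (φ i x) * φ j x ∂μ = if i = j then 1 else 0)
    {h : ι → Y → 𝕜} {T : Module.End 𝕜 (Lp 𝕜 2 (μ.prod ν))}
    (hT : IsPartialIntegralOperator (fun x s y => ∑ k, φ k x * star (φ k s) * h k y) T)
    {lam : 𝕜} (hlam : lam ≠ 0) (hh : ∀ k, ∀ᵐ y ∂ν, h k y ≠ lam) :
    ¬ T.HasEigenvalue lam := by
  refine not_hasEigenvalue_of_ae_fiber hT ?_
  filter_upwards [ae_all_iff.2 hh] with y hy g hg heq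
  exact ae_eq_zero_of_mul_eq_integral_finiteRank_kernel hφ hφ_orth hlam hy hg heq

end PartialIntegral

theorem statement5
    (a b c d : ℝ) (hab : a < b) (hcd : c < d)
    (n : ℕ) (hn : 1 ≤ n)
    (φ : Fin n → ℝ → ℂ)
    (hφL2 : ∀ k, MemLp (φ k) 2 (muI a b))
    (hφON : ∀ i j, ∫ x, star (φ i x) * φ j x ∂(muI a b) = if i = j then 1 else 0)
    (h : Fin n → ℝ → ℝ)
    (hhmeas : ∀ k, Measurable (h k))
    (hhbdd : ∀ k, ∃ C : ℝ, ∀ᵐ y ∂(muI c d), |h k y| ≤ C)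
    (T1 : Lp ℂ 2 ((muI a b).prod (muI c d)) →L[ℂ] Lp ℂ 2 ((muI a b).prod (muI c d)))
    (hT1sa : IsSelfAdjoint T1)
    (hT1 : ∀ f : Lp ℂ 2 ((muI a b).prod (muI c d)),
      ∀ᵐ z ∂((muI a b).prod (muI c d)),
        T1 f z = ∫ s, (∑ k, φ k z.1 * star (φ k s) * (h k z.2 : ℂ)) * f (s, z.2) ∂(muI a b))
    (hhcont : ∀ k, ContinuousOn (h k) (Set.Icc c d))
    (hhmono : ∀ k, StrictMonoOn (h k) (Set.Icc c d) ∨ StrictAntiOn (h k) (Set.Icc c d)) :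
    ∀ lam : ℂ, lam ≠ 0 →
      ¬ ∃ f : Lp ℂ 2 ((muI a b).prod (muI c d)), f ≠ 0 ∧ T1 f = lam • f := by
  rintro lam hlam ⟨f, hf0, hf⟩
  have hlevel (k : Fin n) : ∀ᵐ y ∂muI c d, (h k y : ℂ) ≠ lam :=
    ae_restrict_ne_of_injOn measurableSet_Icc
      (ofReal_injective.comp_injOn ((hhmono k).elim (·.injOn) (·.injOn))) lam
  exact statement5_general (T := T1.toLinearMap) (h := fun k y => (h k y : ℂ))
    hφL2 hφON hT1 hlam hlevel <|
    Module.End.hasEigenvalue_of_hasEigenvector ⟨Module.End.mem_eigenspace_iff.2 hf, hf0⟩
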